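/- arXiv:1410.2011 — 4 statements merged into one kernel-verified Lean document; each statement's English description precedes it below -/
import Mathlib

section
/- Let 𝔞 be an ideal of ℤ[x_1, …, x_n] such that R = ℤ[x_1, …, x_n]/𝔞 is a free, finitely generated ℤ-module of rank N ≥ 1. Then 𝔞 is a prime ideal if and only if every nonzero ideal of R is a full rank lattice, i.e., every nonzero ideal of R, viewed as a ℤ-module, has rank exactly N. -/
/-!
Let `A` be a ring of finite positive rank over `k`. If `a ≠ 0` lies in an ideal `I` and `A` has no
zero divisors, then `r ↦ r * a` embeds `A` into `I`, so `I` has full rank. Conversely, rank-nullity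
for `r ↦ r * y` says that the ranks of the ideal generated by `y` and of the annihilator of `y` add
up to the rank of `A`. If `x * y = 0` with `x, y ≠ 0`, both ideals are nonzero, so they cannot both
have full rank.
-/

universe u

section Rank

variable (k : Type*) {A : Type u} [Ring k] [Ring A] [Module k A] [IsScalarTower k A A]

theorem rank_le_rank_ideal_of_ne_bot [NoZeroDivisors A] {I : Ideal A} (hI : I ≠ ⊥) :
    Module.rank k A ≤ Module.rank k I := by
  obtain ⟨a, haI, ha⟩ := Submodule.exists_mem_ne_zero_of_ne_bot hI
  let mulByA : A →ₗ[A] I := LinearMap.toSpanSingleton A I ⟨a, haI⟩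
  have mulByA_injective : Function.Injective mulByA := fun _ _ h =>
    mul_left_injective₀ ha (congrArg Subtype.val h)
  exact LinearMap.rank_le_of_injective (mulByA.restrictScalars k) mulByA_injective

theorem rank_ideal_eq_rank_of_ne_bot [NoZeroDivisors A] {I : Ideal A} (hI : I ≠ ⊥) :
    Module.rank k I = Module.rank k A :=
  (Submodule.rank_le (I.restrictScalars k)).antisymm (rank_le_rank_ideal_of_ne_bot k hI)

theorem rank_span_singleton_add_rank_torsionOf [HasRankNullity.{u} k] {M : Type u}
    [AddCommGroup M] [Module k M] [Module A M] [IsScalarTower k A M] (x : M) :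
    Module.rank k (Submodule.span A {x}) + Module.rank k (Ideal.torsionOf A M x) =
      Module.rank k A := by
  rw [← ((Ideal.quotTorsionOfEquivSpanSingleton A M x).restrictScalars k).rank_eq]
  exact Submodule.rank_quotient_add_rank ((Ideal.torsionOf A M x).restrictScalars k)

variable {k}

theorem noZeroDivisors_of_forall_ideal_rank_eq [HasRankNullity.{u} k]
    (hpos : 0 < Module.rank k A) (hfin : Module.rank k A < Cardinal.aleph0)
    (hrank : ∀ I : Ideal A, I ≠ ⊥ → Module.rank k I = Module.rank k A) : NoZeroDivisors A := by
  refine ⟨fun {x y} hxy => ?_⟩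
  by_contra! hne
  have hspan : Ideal.span {y} ≠ ⊥ := by simpa using hne.2
  have htorsion : Ideal.torsionOf A A y ≠ ⊥ := (Submodule.ne_bot_iff _).2 ⟨x, hxy, hne.1⟩
  have hdouble : Module.rank k A + Module.rank k A = Module.rank k A + 0 := calc
    _ = Module.rank k (Ideal.span {y}) + Module.rank k (Ideal.torsionOf A A y) := by
      rw [hrank _ hspan, hrank _ htorsion]
    _ = Module.rank k A := rank_span_singleton_add_rank_torsionOf k y
    _ = Module.rank k A + 0 := (add_zero _).symm
  exact hpos.ne' (Cardinal.eq_of_add_eq_add_left hdouble hfin)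

theorem noZeroDivisors_iff_forall_ideal_rank_eq [HasRankNullity.{u} k]
    (hpos : 0 < Module.rank k A) (hfin : Module.rank k A < Cardinal.aleph0) :
    NoZeroDivisors A ↔ ∀ I : Ideal A, I ≠ ⊥ → Module.rank k I = Module.rank k A :=
  ⟨fun _ _ => rank_ideal_eq_rank_of_ne_bot k, noZeroDivisors_of_forall_ideal_rank_eq hpos hfin⟩

end Rank

theorem prime_iff_ideals_full_rank_general {k : Type*} {P : Type u} [CommRing k]
    [HasRankNullity.{u} k] [CommRing P] [Algebra k P] (𝔞 : Ideal P)
    (hpos : 0 < Module.rank k (P ⧸ 𝔞)) (hfin : Module.rank k (P ⧸ 𝔞) < Cardinal.aleph0) :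
    𝔞.IsPrime ↔
      ∀ 𝔄 : Ideal (P ⧸ 𝔞), 𝔄 ≠ ⊥ → Module.rank k 𝔄 = Module.rank k (P ⧸ 𝔞) := by
  have := nontrivial_of_hasRankNullity k
  have : Nontrivial (P ⧸ 𝔞) := by
    by_contra! _
    exact hpos.ne' (rank_subsingleton' k (P ⧸ 𝔞))
  rw [← Ideal.Quotient.isDomain_iff_prime, ← noZeroDivisors_iff_forall_ideal_rank_eq hpos hfin]
  exact ⟨fun _ => inferInstance, fun _ => NoZeroDivisors.to_isDomain _⟩

/-- Let `𝔞 ⊆ ℤ[x_1,…,x_n]` be an ideal such that `R = ℤ[x_1,…,x_n]/𝔞` is a free,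
finitely generated `ℤ`-module of rank `N ≥ 1` (witnessed by a basis).  Then `𝔞` is
prime if and only if every nonzero ideal of `R` is a full rank lattice, i.e. has
rank exactly `N` as a `ℤ`-module (`Module.rank ℤ` is the supremum of the
cardinalities of linearly independent families). -/
theorem prime_iff_ideals_full_rank
    (n N : ℕ) (hN : 1 ≤ N) (𝔞 : Ideal (MvPolynomial (Fin n) ℤ))
    (b : Module.Basis (Fin N) ℤ (MvPolynomial (Fin n) ℤ ⧸ 𝔞)) :
    𝔞.IsPrime ↔
      ∀ 𝔄 : Ideal (MvPolynomial (Fin n) ℤ ⧸ 𝔞), 𝔄 ≠ ⊥ → Module.rank ℤ 𝔄 = N := by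
  have hrank : Module.rank ℤ (MvPolynomial (Fin n) ℤ ⧸ 𝔞) = N := by simp [rank_eq_card_basis b]
  exact hrank ▸ prime_iff_ideals_full_rank_general 𝔞 (hrank ▸ Nat.cast_pos.2 hN)
    (hrank ▸ Cardinal.natCast_lt_aleph0)
end

section
/- Let L be a subgroup of ℤ^n and let 𝔞_L ⊆ ℤ[x_1, …, x_n] be the lattice ideal of L. Then the quotient ring ℤ[x_1, …, x_n]/𝔞_L is a free ℤ-module, and consequently every ideal of ℤ[x_1, …, x_n]/𝔞_L is free as a ℤ-module (i.e., every ideal in ℤ[x_1, …, x_n]/𝔞_L is an ideal lattice). -/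
open MvPolynomial

/-- The lattice ideal `𝔞_L ⊆ ℤ[x_1,…,x_n]` of a subgroup `L ⊆ ℤ^n`: the ideal
generated by the binomials `x^(v⁺) − x^(v⁻)` for `v ∈ L`, where `v⁺_i = max(v_i, 0)`
and `v⁻_i = max(−v_i, 0)` (so `(v i).toNat` and `(-v i).toNat`). -/
noncomputable def latticeIdeal (n : ℕ) (L : Submodule ℤ (Fin n → ℤ)) : Ideal (MvPolynomial (Fin n) ℤ) :=
  Ideal.span ((fun v : Fin n → ℤ =>
    (∏ i, (X i : MvPolynomial (Fin n) ℤ) ^ (v i).toNat) -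
      ∏ i, (X i : MvPolynomial (Fin n) ℤ) ^ (-v i).toNat) '' (L : Set (Fin n → ℤ)))

/-!
Identifying monomials whose exponents differ by an element of `L` is imposing a congruence on the
monoid of exponents. For any congruence `c` on a commutative monoid `M`, the quotient of `R[M]` by
the binomials `x ^ a - x ^ b` with `c a b` is the monoid algebra `R[M / c]`, which is free over `R`
on its monomials.
Over a principal ideal domain, submodules of free modules of arbitrary rank are free: well-order a
basis and, for each basis vector, choose an element of the submodule whose leading coefficient there
generates the ideal of all such leading coefficients.
-/

section LeadingCoeffs

variable {R ι : Type*} [LinearOrder ι]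

section Semiring

variable [Semiring R]

theorem exists_mem_support_mem_supported_Iic {f : ι →₀ R} (hf : f ≠ 0) :
    ∃ i ∈ f.support, f ∈ Finsupp.supported R R (Set.Iic i) := by
  obtain ⟨i, hi, hmax⟩ := f.support.exists_max_image id (Finsupp.support_nonempty_iff.2 hf)
  exact ⟨i, hi, hmax⟩

/-- The ideal of leading coefficients at `i` of a submodule `N` of `ι →₀ R`, the leading term being
the one of largest index. As in Gröbner theory, these ideals detect equality of nested submodules.
An element of `N` counts as soon as it vanishes beyond `i`, so that `0` is a leading coefficient. -/
noncomputable def leadingCoeffs (N : Submodule R (ι →₀ R)) (i : ι) : Ideal R :=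
  (N ⊓ Finsupp.supported R R (Set.Iic i)).map (Finsupp.lapply i)

theorem mem_leadingCoeffs {N : Submodule R (ι →₀ R)} {i : ι} {r : R} :
    r ∈ leadingCoeffs N i ↔ ∃ f ∈ N, f ∈ Finsupp.supported R R (Set.Iic i) ∧ f i = r := by
  simp [leadingCoeffs, and_assoc]

end Semiring

theorem eq_of_le_of_leadingCoeffs_le [Ring R] [WellFoundedLT ι] {M N : Submodule R (ι →₀ R)}
    (hMN : M ≤ N) (hlead : ∀ i, leadingCoeffs N i ≤ leadingCoeffs M i) : M = N := by
  have mem_of_supported : ∀ i, ∀ f ∈ N, f ∈ Finsupp.supported R R (Set.Iic i) → f ∈ M := by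
    intro i
    induction i using WellFoundedLT.induction with
    | _ i ih =>
    intro f hfN hfi
    obtain ⟨g, hgM, hgi, hgf⟩ :=
      mem_leadingCoeffs.1 (hlead i (mem_leadingCoeffs.2 ⟨f, hfN, hfi, rfl⟩))
    suffices h : f - g ∈ M from (M.sub_mem_iff_left hgM).1 h
    by_cases hfg : f - g = 0
    · exact hfg ▸ M.zero_mem
    · obtain ⟨j, hj, hfgj⟩ := exists_mem_support_mem_supported_Iic hfg
      have hji : j ≤ i := Submodule.sub_mem _ hfi hgi hj
      have hne : j ≠ i := by
        rintro rfl
        simp [hgf] at hj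
      exact ih j (hji.lt_of_ne hne) _ (N.sub_mem hfN (hMN hgM)) hfgj
  refine hMN.antisymm fun f hfN => ?_
  by_cases hf : f = 0
  · exact hf ▸ M.zero_mem
  · obtain ⟨i, -, hfi⟩ := exists_mem_support_mem_supported_Iic hf
    exact mem_of_supported i f hfN hfi

theorem linearIndependent_of_injective_leading [Ring R] [NoZeroDivisors R] {κ : Type*}
    {v : κ → ι →₀ R} {lead : κ → ι} (hinj : lead.Injective)
    (hsupp : ∀ k, v k ∈ Finsupp.supported R R (Set.Iic (lead k)))
    (hne : ∀ k, v k (lead k) ≠ 0) : LinearIndependent R v := by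
  rw [linearIndependent_iff]
  intro g hg
  by_contra hg0
  obtain ⟨k, hk, hmax⟩ := g.support.exists_max_image lead (Finsupp.support_nonempty_iff.2 hg0)
  have vanish_of_ne : ∀ l ∈ g.support, l ≠ k → (g l • v l) (lead k) = 0 := by
    intro l hl hlk
    have hlt : lead l < lead k := (hmax l hl).lt_of_ne (hinj.ne hlk)
    simp [(Finsupp.mem_supported' R _).1 (hsupp l) (lead k) hlt.not_ge]
  have hcoeff : g k * v k (lead k) = 0 := calc
    g k * v k (lead k) = ∑ l ∈ g.support, (g l • v l) (lead k) :=
      (Finset.sum_eq_single_of_mem k hk vanish_of_ne).symm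
    _ = Finsupp.linearCombination R v g (lead k) := by
      rw [Finsupp.linearCombination_apply, Finsupp.sum, Finsupp.finsetSum_apply]
    _ = 0 := by rw [hg, Finsupp.zero_apply]
  exact mul_ne_zero (Finsupp.mem_support_iff.1 hk) (hne k) hcoeff

end LeadingCoeffs

section PrincipalIdealDomain

variable {R M : Type*} [Ring R] [IsDomain R] [IsPrincipalIdealRing R]

theorem module_free_submodule_finsupp {ι : Type*} (N : Submodule R (ι →₀ R)) :
    Module.Free R N := by
  obtain ⟨_, _⟩ := exists_wellFoundedLT ι
  have exists_generator : ∀ i, ∃ f ∈ N, f ∈ Finsupp.supported R R (Set.Iic i) ∧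
      f i = Submodule.IsPrincipal.generator (leadingCoeffs N i) := fun i =>
    mem_leadingCoeffs.1 (Submodule.IsPrincipal.generator_mem _)
  choose x hxN hxsupp hxgen using exists_generator
  let v : {i // x i i ≠ 0} → ι →₀ R := fun i => x i
  have hv : LinearIndependent R v :=
    linearIndependent_of_injective_leading Subtype.val_injective (fun i => hxsupp i) fun i => i.2
  have hlead : ∀ i, leadingCoeffs N i ≤ leadingCoeffs (Submodule.span R (Set.range v)) i := by
    intro i
    rw [← (leadingCoeffs N i).span_singleton_generator, Ideal.span_singleton_le_iff_mem, ← hxgen]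
    by_cases hi : x i i = 0
    · simp [hi]
    · exact mem_leadingCoeffs.2 ⟨x i, Submodule.subset_span ⟨⟨i, hi⟩, rfl⟩, hxsupp i, rfl⟩
  have hspan : Submodule.span R (Set.range v) = N :=
    eq_of_le_of_leadingCoeffs_le
      (Submodule.span_le.2 (Set.range_subset_iff.2 fun i => hxN i)) hlead
  rw [← hspan]
  exact Module.Free.of_basis (Module.Basis.span hv)

theorem module_free_submodule [AddCommGroup M] [Module R M] [Module.Free R M]
    (N : Submodule R M) : Module.Free R N :=
  let e := (Module.Free.chooseBasis R M).repr
  have := module_free_submodule_finsupp (N.map e.toLinearMap)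
  Module.Free.of_equiv (e.submoduleMap N).symm

end PrincipalIdealDomain

section BinomialIdeal

open AddMonoidAlgebra

variable (R : Type*) {M : Type*} [CommRing R] [AddCommMonoid M] (c : AddCon M)

/-- The ideal of the monoid algebra `R[M]` generated by the binomials `x ^ a - x ^ b` with `a` and
`b` congruent modulo `c`; lattice ideals are the case of a congruence on `ℕ ^ n`. The monomial
`x ^ a` is encoded as `single a 1`. -/
noncomputable def binomialIdeal : Ideal R[M] :=
  Ideal.span {p | ∃ a b, c a b ∧ single a 1 - single b 1 = p}

variable {c} in
theorem single_sub_single_mem_binomialIdeal {a b : M} (h : c a b) :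
    (single a 1 - single b 1 : R[M]) ∈ binomialIdeal R c :=
  Ideal.subset_span ⟨a, b, h, rfl⟩

theorem binomialIdeal_le_ker_mapDomainAlgHom :
    binomialIdeal R c ≤ RingHom.ker (mapDomainAlgHom R R c.mk') := by
  refine Ideal.span_le.2 ?_
  rintro _ ⟨a, b, h, rfl⟩
  have hab : c.mk' a = c.mk' b := (AddCon.eq c).2 h
  simp only [SetLike.mem_coe, RingHom.mem_ker, map_sub, mapDomainAlgHom_apply, mapDomain_single,
    hab, sub_self]

/-- The map `R[M] / (x ^ a - x ^ b : c a b) → R[M / c]` sending the class of the monomial `x ^ a` to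
the monomial of the class of `a`. -/
noncomputable def quotientBinomialIdealHom :
    (R[M] ⧸ binomialIdeal R c) →ₐ[R] R[c.Quotient] :=
  Ideal.Quotient.liftₐ _ (mapDomainAlgHom R R c.mk') fun _ hp =>
    RingHom.mem_ker.1 (binomialIdeal_le_ker_mapDomainAlgHom R c hp)

theorem quotientBinomialIdealHom_mk_single (a : M) (r : R) :
    quotientBinomialIdealHom R c (Ideal.Quotient.mk _ (single a r)) = single (a : c.Quotient) r :=
  mapDomain_single

/-- The residue class of the monomial `x ^ a` modulo the binomial ideal, as a multiplicative
function of the congruence class of the exponent `a`. -/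
noncomputable def monomialClass :
    Multiplicative c.Quotient →* R[M] ⧸ binomialIdeal R c :=
  AddMonoidHom.toMultiplicativeLeft <|
    c.lift (MonoidHom.toAdditiveRight <|
      (Ideal.Quotient.mk (binomialIdeal R c)).toMonoidHom.comp (of R M)) fun _ _ h =>
        Ideal.Quotient.eq.2 (single_sub_single_mem_binomialIdeal R h)

theorem monomialClass_ofAdd_coe (a : M) :
    monomialClass R c (Multiplicative.ofAdd (a : c.Quotient)) =
      Ideal.Quotient.mk (binomialIdeal R c) (single a 1) :=
  rfl

/-- The isomorphism `R[M] / (x ^ a - x ^ b : c a b) ≃ R[M / c]`, which exhibits the quotient as a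
free `R`-module. -/
noncomputable def quotientBinomialIdealEquiv :
    (R[M] ⧸ binomialIdeal R c) ≃ₐ[R] R[c.Quotient] :=
  AlgEquiv.ofAlgHom (quotientBinomialIdealHom R c) (AddMonoidAlgebra.lift R _ _ (monomialClass R c))
    (by
      refine AddMonoidAlgebra.algHom_ext (fun q => ?_) (Subsingleton.elim _ _)
      induction q using AddCon.induction_on with
      | H a => simp [monomialClass_ofAdd_coe, quotientBinomialIdealHom_mk_single])
    (by
      refine Ideal.Quotient.algHom_ext R
        (AddMonoidAlgebra.algHom_ext (fun a => ?_) (Subsingleton.elim _ _))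
      simp [monomialClass_ofAdd_coe, quotientBinomialIdealHom_mk_single])

instance module_free_quotient_binomialIdeal : Module.Free R (R[M] ⧸ binomialIdeal R c) :=
  Module.Free.of_equiv (quotientBinomialIdealEquiv R c).symm.toLinearEquiv

end BinomialIdeal

theorem latticeIdeal_quotient_free_general (R : Type*) {M : Type*} [CommRing R] [IsDomain R]
    [IsPrincipalIdealRing R] [AddCommMonoid M] (c : AddCon M) :
    Module.Free R (AddMonoidAlgebra R M ⧸ binomialIdeal R c) ∧
      ∀ 𝔄 : Ideal (AddMonoidAlgebra R M ⧸ binomialIdeal R c), Module.Free R 𝔄 :=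
  ⟨inferInstance, fun 𝔄 => module_free_submodule (𝔄.restrictScalars R)⟩

section LatticeIdeal

variable {σ : Type*}

/-- The congruence on exponent vectors in `ℕ ^ σ` defined by a subgroup `L` of `ℤ ^ σ`: two vectors
are congruent when their difference lies in `L`. The lattice ideal of `L` is its binomial ideal. -/
noncomputable def latticeCon (L : Submodule ℤ (σ → ℤ)) : AddCon (σ →₀ ℕ) :=
  AddCon.ker (L.mkQ.toAddMonoidHom.comp
    (((Nat.castAddMonoidHom ℤ).compLeft σ).comp Finsupp.coeFnAddHom))

theorem latticeCon_iff {L : Submodule ℤ (σ → ℤ)} {a b : σ →₀ ℕ} :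
    latticeCon L a b ↔ (fun i => (a i : ℤ) - b i) ∈ L :=
  Submodule.Quotient.eq L

theorem prod_univ_X_pow_eq_monomial {R : Type*} [CommSemiring R] [Fintype σ] (a : σ → ℕ) :
    (∏ i, X i ^ a i : MvPolynomial σ R) = monomial (Finsupp.equivFunOnFinite.symm a) 1 := by
  simp [monomial_eq, Finsupp.prod_fintype]

theorem latticeIdeal_le_binomialIdeal (n : ℕ) (L : Submodule ℤ (Fin n → ℤ)) :
    latticeIdeal n L ≤ binomialIdeal ℤ (latticeCon L) := by
  rw [latticeIdeal, Ideal.span_le]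
  rintro _ ⟨v, hv, rfl⟩
  simp only [prod_univ_X_pow_eq_monomial]
  refine single_sub_single_mem_binomialIdeal ℤ (latticeCon_iff.2 ?_)
  simpa [Int.toNat_sub_toNat_neg] using hv

theorem monomial_sub_monomial_mem_latticeIdeal {n : ℕ} {L : Submodule ℤ (Fin n → ℤ)}
    {a b : Fin n →₀ ℕ} (h : latticeCon L a b) :
    (monomial a 1 - monomial b 1 : MvPolynomial (Fin n) ℤ) ∈ latticeIdeal n L := by
  have hgen : (monomial (a - b) 1 - monomial (b - a) 1 : MvPolynomial (Fin n) ℤ) ∈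
      latticeIdeal n L := by
    refine Ideal.subset_span ⟨_, latticeCon_iff.1 h, ?_⟩
    simp only [prod_univ_X_pow_eq_monomial]
    congr 3 <;> ext i <;> simp
  have hfactor : (monomial a 1 - monomial b 1 : MvPolynomial (Fin n) ℤ) =
      monomial (a ⊓ b) 1 * (monomial (a - b) 1 - monomial (b - a) 1) := by
    simp only [mul_sub, monomial_mul, one_mul]
    congr 3 <;> ext i <;> simp <;> omega
  exact hfactor ▸ Ideal.mul_mem_left _ _ hgen

theorem latticeIdeal_eq_binomialIdeal (n : ℕ) (L : Submodule ℤ (Fin n → ℤ)) :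
    latticeIdeal n L = binomialIdeal ℤ (latticeCon L) := by
  refine (latticeIdeal_le_binomialIdeal n L).antisymm (Ideal.span_le.2 ?_)
  rintro _ ⟨a, b, h, rfl⟩
  exact monomial_sub_monomial_mem_latticeIdeal h

end LatticeIdeal

/-- For a subgroup `L ⊆ ℤ^n` with lattice ideal `𝔞_L`, the quotient ring
`ℤ[x_1,…,x_n]/𝔞_L` is a free `ℤ`-module, and consequently every ideal of the
quotient is free as a `ℤ`-module (every ideal in `ℤ[x_1,…,x_n]/𝔞_L` is an
ideal lattice). -/
theorem latticeIdeal_quotient_free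
    (n : ℕ) (L : Submodule ℤ (Fin n → ℤ)) :
    Module.Free ℤ (MvPolynomial (Fin n) ℤ ⧸ latticeIdeal n L) ∧
      ∀ 𝔄 : Ideal (MvPolynomial (Fin n) ℤ ⧸ latticeIdeal n L), Module.Free ℤ 𝔄 := by
  rw [latticeIdeal_eq_binomialIdeal]
  exact latticeIdeal_quotient_free_general ℤ (latticeCon L)
end

section
/- Let L be a subgroup of ℤ^n and let 𝔞_L ⊆ ℤ[x_1, …, x_n] be the lattice ideal of L. Then 𝔞_L is a prime ideal if and only if L is saturated, i.e., L = Sat(L). -/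
open MvPolynomial

/-!
Let `G = ℤ^σ / L`. Sending each monomial to the class of its exponent vector maps the polynomial
ring to the group ring `R[G]`, and `𝔞_L` is the kernel. If `G` is torsion-free then `R[G]` is a
domain, so the kernel is prime. Conversely, if the classes of `a` and `b` differ by an element of
finite order `k`, the kernel contains `x^(ka) − x^(kb)`. Its factor `∑ i < k, x^(ia) x^((k-1-i)b)`
is not in the kernel, in any characteristic, because its `k` terms map to distinct elements of `G`.
Hence primality forces `x^a − x^b` into the kernel, that is, `a` and `b` have the same class.
-/

section AddMonoidAlgebra

open AddMonoidAlgebra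

variable {R M N G : Type*}

theorem single_sub_single_mem_ker_mapDomainRingHom [Ring R] [AddMonoid M] [AddMonoid N]
    (f : M →+ N) {a b : M} (hab : f a = f b) :
    single a 1 - single b 1 ∈ RingHom.ker (mapDomainRingHom R f) := by
  rw [RingHom.mem_ker, map_sub]
  simp [hab]

theorem ker_mapDomainRingHom_eq_span [Ring R] [AddMonoid M] [AddMonoid N] (f : M →+ N) :
    RingHom.ker (mapDomainRingHom R f) =
      Ideal.span {p | ∃ a b, f a = f b ∧ single a (1 : R) - single b 1 = p} := by
  set S := {p | ∃ a b, f a = f b ∧ single a (1 : R) - single b 1 = p}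
  refine le_antisymm (fun p hp => ?_) (Ideal.span_le.2 ?_)
  · -- `s ∘ f` picks a representative in each fibre of `f`; moving `p` onto representatives
    -- changes it by binomials and factors through `mapDomain f p = 0`.
    let s : N → M := Function.invFun f
    have hs (m : M) : f (s (f m)) = f m := Function.invFun_eq ⟨m, rfl⟩
    have sub_mem (q : R[M]) : q - (q.mapDomain f).mapDomain s ∈ Ideal.span S := by
      induction q using induction_linear with
      | zero => simp
      | add x y hx hy => simpa only [mapDomain_add, add_sub_add_comm] using add_mem hx hy
      | single m r =>
        have generator_mem := Ideal.subset_span (s := S) ⟨m, s (f m), (hs m).symm, rfl⟩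
        simpa [mul_sub, single_mul_single] using Ideal.mul_mem_left _ (single 0 r) generator_mem
    have hp : p.mapDomain f = 0 := hp
    simpa [hp] using sub_mem p
  · rintro _ ⟨a, b, hab, rfl⟩
    exact single_sub_single_mem_ker_mapDomainRingHom f hab

theorem geom_sum₂_single_ne_zero [Semiring R] [Nontrivial R] [AddCommGroup G] {a b : G}
    (hab : IsOfFinAddOrder (a - b)) :
    ∑ i ∈ Finset.range (addOrderOf (a - b)),
      single a (1 : R) ^ i * single b 1 ^ (addOrderOf (a - b) - 1 - i) ≠ 0 := by
  classical
  set k := addOrderOf (a - b)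
  have exponent_eq_iff {i : ℕ} (hi : i < k) :
      i • a + (k - 1 - i) • b = (k - 1) • b ↔ i = 0 := by
    have hsum : i • a + (k - 1 - i) • b = i • (a - b) + (k - 1) • b := by
      rw [← Nat.sub_add_cancel (Nat.le_sub_one_of_lt hi), add_nsmul, smul_sub, Nat.add_sub_cancel]
      abel
    rw [hsum, add_eq_right]
    refine ⟨fun h => ?_, by rintro rfl; exact zero_nsmul _⟩
    by_contra hi0
    exact nsmul_ne_zero_of_lt_addOrderOf hi0 hi h
  intro hzero
  have hcoeff := congr_arg (fun p => p.coeff ((k - 1) • b)) hzero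
  simp only [single_pow, single_mul_single, one_pow, mul_one, AddMonoidAlgebra.coeff_sum,
    Finsupp.finsetSum_apply, AddMonoidAlgebra.coeff_single, Finsupp.single_apply] at hcoeff
  rw [Finset.sum_congr rfl fun i hi => if_congr (exponent_eq_iff (Finset.mem_range.1 hi)) rfl rfl]
    at hcoeff
  simp [k, hab] at hcoeff

theorem eq_of_isOfFinAddOrder_sub_of_isPrime_ker [CommRing R] [AddCommMonoid M] [AddCommGroup G]
    (f : M →+ G) (hprime : (RingHom.ker (mapDomainRingHom R f)).IsPrime)
    {a b : M} (hab : IsOfFinAddOrder (f a - f b)) : f a = f b := by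
  have : Nontrivial R :=
    not_subsingleton_iff_nontrivial.1 fun _ => hprime.ne_top (Subsingleton.elim _ _)
  set k := addOrderOf (f a - f b)
  let x : R[M] := .single a 1
  let y : R[M] := .single b 1
  have pow_sub_pow_mem : x ^ k - y ^ k ∈ RingHom.ker (mapDomainRingHom R f) := by
    have : k • f a = k • f b := by rw [← sub_eq_zero, ← smul_sub, addOrderOf_nsmul_eq_zero]
    simpa [x, y, single_pow] using
      single_sub_single_mem_ker_mapDomainRingHom f (by simpa only [map_nsmul] using this)
  rw [← geom_sum₂_mul] at pow_sub_pow_mem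
  rcases hprime.mem_or_mem pow_sub_pow_mem with hsum | hsub
  · exact absurd (by simpa [x, y, RingHom.mem_ker] using hsum)
      (geom_sum₂_single_ne_zero (R := R) hab)
  · have : single (f a) (1 : R) = .single (f b) 1 := by
      rw [RingHom.mem_ker, map_sub, sub_eq_zero] at hsub
      simpa [x, y] using hsub
    exact single_left_injective one_ne_zero this

theorem twoUniqueSums_of_isAddTorsionFree [AddCommGroup G] [IsAddTorsionFree G] :
    TwoUniqueSums G :=
  .of_injective_addHom (DivisibleHull.coeAddMonoidHom G).toAddHom DivisibleHull.coe_injective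
    inferInstance

theorem isPrime_ker_mapDomainRingHom_iff [CommRing R] [IsDomain R] [AddCommMonoid M]
    [AddCommGroup G] (f : M →+ G) (hf : ∀ g, ∃ a b, f a - f b = g) :
    (RingHom.ker (mapDomainRingHom R f)).IsPrime ↔ IsAddTorsionFree G := by
  refine ⟨fun hprime => .of_not_isOfFinAddOrder fun g hg hfin => ?_, fun _ => ?_⟩
  · obtain ⟨a, b, rfl⟩ := hf g
    exact hg (sub_eq_zero.2 (eq_of_isOfFinAddOrder_sub_of_isPrime_ker f hprime hfin))
  · have := twoUniqueSums_of_isAddTorsionFree (G := G)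
    have : IsDomain R[G] := NoZeroDivisors.to_isDomain _
    exact RingHom.ker_isPrime _

end AddMonoidAlgebra

theorem isTorsionFree_quotient_iff_eq_saturation {A V : Type*} [Ring A] [IsDomain A]
    [AddCommGroup V] [Module A V] (L : Submodule A V) :
    Module.IsTorsionFree A (V ⧸ L) ↔ (L : Set V) = {v | ∃ d : A, d ≠ 0 ∧ d • v ∈ L} := by
  have le_saturation : (L : Set V) ⊆ {v | ∃ d : A, d ≠ 0 ∧ d • v ∈ L} :=
    fun v hv => ⟨1, one_ne_zero, by rwa [one_smul]⟩
  rw [Module.isTorsionFree_iff_smul_eq_zero, ← le_saturation.ge_iff_eq, Set.ofPred_subset]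
  simp only [L.mkQ_surjective.forall, Submodule.mkQ_apply, ← Submodule.Quotient.mk_smul,
    Submodule.Quotient.mk_eq_zero, SetLike.mem_coe]
  grind

section LatticeIdeal

variable {σ : Type*} (R : Type*) [CommRing R] (L : Submodule ℤ (σ →₀ ℤ))

/-- The lattice ideal of `L ⊆ ℤ^(σ)` with coefficients in `R`, for variables indexed by a possibly
infinite type `σ`; exponent vectors are finitely supported, and `v⁺`, `v⁻` are the coordinatewise
`Int.toNat` of `v`, `-v`. -/
noncomputable def finsuppLatticeIdeal : Ideal (MvPolynomial σ R) :=
  Ideal.span ((fun v : σ →₀ ℤ =>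
    monomial (v.mapRange Int.toNat Int.toNat_zero) (1 : R) -
      monomial ((-v).mapRange Int.toNat Int.toNat_zero) 1) '' L)

/-- The class in `ℤ^(σ) / L` of the exponent vector of a monomial. This is the grading for which the
lattice ideal is generated by the differences of monomials of equal degree. -/
noncomputable def exponentClass : (σ →₀ ℕ) →+ (σ →₀ ℤ) ⧸ L :=
  L.mkQ.toAddMonoidHom.comp (Finsupp.mapRange.addMonoidHom (Nat.castAddMonoidHom ℤ))

variable {L}

theorem exponentClass_eq_iff {a b : σ →₀ ℕ} :
    exponentClass L a = exponentClass L b ↔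
      a.mapRange Nat.cast Nat.cast_zero - b.mapRange Nat.cast Nat.cast_zero ∈ L :=
  Submodule.Quotient.eq L

theorem mapRange_toNat_sub_mapRange_toNat_neg (v : σ →₀ ℤ) :
    (v.mapRange Int.toNat Int.toNat_zero).mapRange Nat.cast Nat.cast_zero -
      ((-v).mapRange Int.toNat Int.toNat_zero).mapRange Nat.cast Nat.cast_zero = v := by
  ext i
  simp

theorem inf_add_mapRange_toNat_sub (a b : σ →₀ ℕ) :
    a ⊓ b + Finsupp.mapRange Int.toNat Int.toNat_zero
      (a.mapRange Nat.cast Nat.cast_zero - b.mapRange Nat.cast Nat.cast_zero) = a := by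
  ext i
  simp only [Finsupp.coe_add, Pi.add_apply, Finsupp.inf_apply, Finsupp.mapRange_apply,
    Finsupp.coe_sub, Pi.sub_apply]
  omega

theorem exists_exponentClass_sub_eq (g : (σ →₀ ℤ) ⧸ L) :
    ∃ a b, exponentClass L a - exponentClass L b = g := by
  obtain ⟨v, rfl⟩ := L.mkQ_surjective g
  exact ⟨_, _, congr_arg L.mkQ (mapRange_toNat_sub_mapRange_toNat_neg v)⟩

theorem monomial_sub_monomial_mem_finsuppLatticeIdeal {a b : σ →₀ ℕ}
    (hab : a.mapRange Nat.cast Nat.cast_zero - b.mapRange Nat.cast Nat.cast_zero ∈ L) :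
    monomial a (1 : R) - monomial b 1 ∈ finsuppLatticeIdeal R L := by
  have binomial_mul_mem := (finsuppLatticeIdeal R L).mul_mem_left (monomial (a ⊓ b) 1)
    (Ideal.subset_span ⟨_, hab, rfl⟩)
  rwa [mul_sub, monomial_mul, monomial_mul, mul_one, inf_add_mapRange_toNat_sub, neg_sub,
    inf_comm a b, inf_add_mapRange_toNat_sub] at binomial_mul_mem

variable (L) in
theorem finsuppLatticeIdeal_eq_ker :
    finsuppLatticeIdeal R L =
      RingHom.ker (AddMonoidAlgebra.mapDomainRingHom R (exponentClass L)) := by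
  rw [ker_mapDomainRingHom_eq_span]
  refine le_antisymm (Ideal.span_mono ?_) (Ideal.span_le.2 ?_)
  · rintro _ ⟨v, hv, rfl⟩
    refine ⟨_, _, exponentClass_eq_iff.2 ?_, rfl⟩
    rwa [mapRange_toNat_sub_mapRange_toNat_neg]
  · rintro _ ⟨a, b, hab, rfl⟩
    exact monomial_sub_monomial_mem_finsuppLatticeIdeal R (exponentClass_eq_iff.1 hab)

variable (L) in
theorem latticeIdeal_prime_iff_saturated_general [IsDomain R] :
    (finsuppLatticeIdeal R L).IsPrime ↔
      (L : Set (σ →₀ ℤ)) = {α : σ →₀ ℤ | ∃ d : ℤ, d ≠ 0 ∧ d • α ∈ L} := by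
  rw [finsuppLatticeIdeal_eq_ker, isPrime_ker_mapDomainRingHom_iff _ exists_exponentClass_sub_eq,
    ← Module.isTorsionFree_int_iff_isAddTorsionFree, isTorsionFree_quotient_iff_eq_saturation]

end LatticeIdeal

theorem latticeIdeal_eq_finsuppLatticeIdeal_comap (n : ℕ) (L : Submodule ℤ (Fin n → ℤ)) :
    latticeIdeal n L =
      finsuppLatticeIdeal ℤ (L.comap (Finsupp.linearEquivFunOnFinite ℤ ℤ (Fin n)).toLinearMap) := by
  let e := Finsupp.linearEquivFunOnFinite ℤ ℤ (Fin n)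
  have image_comap : (L : Set (Fin n → ℤ)) = e '' (L.comap e.toLinearMap) :=
    (Set.image_preimage_eq _ e.surjective).symm
  rw [latticeIdeal, finsuppLatticeIdeal, image_comap, Set.image_image]
  simp [e, monomial_eq, Finsupp.prod_fintype]

/-- The lattice ideal `𝔞_L` is prime if and only if `L` is saturated, i.e.
`L = Sat(L) = {α ∈ ℤ^n : dα ∈ L for some nonzero d ∈ ℤ}`. -/
theorem latticeIdeal_prime_iff_saturated
    (n : ℕ) (L : Submodule ℤ (Fin n → ℤ)) :
    (latticeIdeal n L).IsPrime ↔
      (L : Set (Fin n → ℤ)) = {α : Fin n → ℤ | ∃ d : ℤ, d ≠ 0 ∧ d • α ∈ L} := by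
  rw [latticeIdeal_eq_finsuppLatticeIdeal_comap, latticeIdeal_prime_iff_saturated_general]
  exact (Finsupp.linearEquivFunOnFinite ℤ ℤ (Fin n)).surjective.preimage_injective.eq_iff
    (a := (L : Set (Fin n → ℤ))) (b := {α | ∃ d : ℤ, d ≠ 0 ∧ d • α ∈ L})
end

section
/- Let r_1, …, r_n ≥ 2 be integers and N = (r_1 − 1)(r_2 − 1) ⋯ (r_n − 1). Let Ω be the set of tuples ω = (ω_1, …, ω_n) ∈ ℂ^n with ω_i^{r_i} = 1 and ω_i ≠ 1 for each i (i.e., the zero set of the ideal ⟨x_1^{r_1 − 1} + ⋯ + 1, …, x_n^{r_n − 1} + ⋯ + 1⟩). Let c be a family of integers indexed by exponent tuples β with 0 ≤ β_i ≤ r_i − 2, and for ω ∈ Ω set S(ω) = Σ_β c_β ω_1^{β_1} ⋯ ω_n^{β_n}. Then max_β |c_β| ≤ N · max_{ω ∈ Ω} |S(ω)| and max_{ω ∈ Ω} |S(ω)| ≤ N · max_β |c_β|; i.e., maxCoeff(α) ≤ N·maxsub(α) and maxsub(α) ≤ N·maxCoeff(α) for every element α of ℤ[x_1, …, x_n]/⟨x_1^{r_1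 − 1} + ⋯ + 1, …, x_n^{r_n − 1} + ⋯ + 1⟩. -/
/-!
In one variable the monomials `x ^ 0, …, x ^ (d - 1)` have an explicit dual basis on the `d`
nontrivial `(d + 1)`-st roots of unity. Orthogonality over all `(d + 1)`-st roots reads off the
coefficient of `x ^ b` with the weight `ω ^ (-b) / (d + 1)` and that of `x ^ d`, which vanishes,
with the weight `ω ^ (-d) / (d + 1) = ω / (d + 1)`; the difference of the two weights is zero at
`ω = 1`, so the point missing from the variety does not contribute. Products of these weights
recover every coefficient from the values on the variety, and each weight has modulus at most
`2 / (d + 1)`. The bound in the other direction is the triangle inequality.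
-/

open Finset Polynomial

section RootsOfUnity

variable {K : Type*} [Field K]

theorem sum_zpow_nthRootsFinset {n : ℕ} [NeZero n] {ζ : K} (hζ : IsPrimitiveRoot ζ n) (a : ℤ) :
    ∑ ω ∈ nthRootsFinset n (1 : K), ω ^ a = if (n : ℤ) ∣ a then (n : K) else 0 := by
  have mem_iff {ω : K} : ω ∈ nthRootsFinset n (1 : K) ↔ ω ^ n = 1 :=
    mem_nthRootsFinset (NeZero.pos n) 1
  split_ifs with ha
  · obtain ⟨k, rfl⟩ := ha
    have term_eq_one : ∀ ω ∈ nthRootsFinset n (1 : K), ω ^ ((n : ℤ) * k) = 1 := fun ω hω => by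
      rw [zpow_mul, zpow_natCast, mem_iff.mp hω, one_zpow]
    rw [sum_congr rfl term_eq_one, sum_const, hζ.card_nthRootsFinset, nsmul_one]
  · have hζ0 : ζ ≠ 0 := hζ.ne_zero (NeZero.ne n)
    -- Multiplication by `ζ` permutes the roots of unity.
    have rotate : ζ ^ a * ∑ ω ∈ nthRootsFinset n (1 : K), ω ^ a =
        ∑ ω ∈ nthRootsFinset n (1 : K), ω ^ a := by
      rw [mul_sum]
      refine sum_nbij' (ζ * ·) (ζ⁻¹ * ·) (fun ω hω => ?_) (fun ω hω => ?_)
        (fun ω _ => inv_mul_cancel_left₀ hζ0 ω) (fun ω _ => mul_inv_cancel_left₀ hζ0 ω)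
        (fun ω _ => (mul_zpow ζ ω a).symm)
      · rw [mem_iff, mul_pow, hζ.pow_eq_one, mem_iff.mp hω, one_mul]
      · rw [mem_iff, mul_pow, inv_pow, hζ.pow_eq_one, mem_iff.mp hω, inv_one, one_mul]
    have hζa : ζ ^ a ≠ 1 := mt (hζ.zpow_eq_one_iff_dvd a).mp ha
    by_contra sum_ne_zero
    exact hζa ((mul_eq_right₀ sum_ne_zero).mp rotate)

/-- The dual basis of the monomials `x ^ b`, `b < d`, on the nontrivial `(d + 1)`-st roots of
unity: pairing a polynomial of degree less than `d` with `dualWeight b` gives its `b`-th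
coefficient. -/
def dualWeight {d : ℕ} (b : Fin d) (ω : K) : K :=
  (ω ^ (-(b : ℤ)) - ω) / (d + 1 : ℕ)

theorem dualWeight_one {d : ℕ} (b : Fin d) : dualWeight b (1 : K) = 0 := by
  rw [dualWeight, one_zpow, sub_self, zero_div]

theorem dualWeight_mul_pow {d : ℕ} (b b' : Fin d) {ω : K} (hω : ω ≠ 0) :
    dualWeight b ω * ω ^ (b' : ℕ) =
      (ω ^ ((b' : ℤ) - b) - ω ^ ((b' : ℤ) + 1)) / (d + 1 : ℕ) := by
  rw [dualWeight, div_mul_eq_mul_div, sub_mul, ← zpow_natCast ω b', ← zpow_add₀ hω,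
    ← zpow_one_add₀ hω, neg_add_eq_sub, add_comm 1]

variable [DecidableEq K]

variable (K) in
/-- The `n`-th roots of unity of `K` other than `1`. -/
noncomputable def nontrivialRoots (n : ℕ) : Finset K :=
  (nthRootsFinset n (1 : K)).erase 1

theorem mem_nontrivialRoots {n : ℕ} [NeZero n] {ω : K} :
    ω ∈ nontrivialRoots K n ↔ ω ^ n = 1 ∧ ω ≠ 1 := by
  rw [nontrivialRoots, mem_erase, mem_nthRootsFinset (NeZero.pos n), and_comm]

theorem card_nontrivialRoots {d : ℕ} {ζ : K} (hζ : IsPrimitiveRoot ζ (d + 1)) :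
    #(nontrivialRoots K (d + 1)) = d := by
  rw [nontrivialRoots, card_erase_of_mem (one_mem_nthRootsFinset d.succ_pos),
    hζ.card_nthRootsFinset, Nat.add_sub_cancel]

theorem sum_dualWeight_mul_pow {d : ℕ} {ζ : K} (hζ : IsPrimitiveRoot ζ (d + 1)) (b b' : Fin d) :
    ∑ ω ∈ nontrivialRoots K (d + 1), dualWeight b ω * ω ^ (b' : ℕ) = if b' = b then 1 else 0 := by
  have hd : ((d + 1 : ℕ) : K) ≠ 0 := hζ.neZero'.ne
  have dvd_sub_iff : ((d + 1 : ℕ) : ℤ) ∣ (b' : ℤ) - b ↔ b' = b := by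
    refine ⟨fun h => ?_, fun h => by rw [h, sub_self]; exact dvd_zero _⟩
    have := Int.eq_zero_of_abs_lt_dvd h (by rw [abs_lt]; omega)
    omega
  have not_dvd_add_one : ¬ ((d + 1 : ℕ) : ℤ) ∣ (b' : ℤ) + 1 := fun h => by
    have := Int.le_of_dvd (by omega) h
    omega
  calc ∑ ω ∈ nontrivialRoots K (d + 1), dualWeight b ω * ω ^ (b' : ℕ)
      = ∑ ω ∈ nthRootsFinset (d + 1) (1 : K), dualWeight b ω * ω ^ (b' : ℕ) :=
        sum_erase _ (by rw [dualWeight_one, zero_mul])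
    _ = ∑ ω ∈ nthRootsFinset (d + 1) (1 : K),
          (ω ^ ((b' : ℤ) - b) - ω ^ ((b' : ℤ) + 1)) / (d + 1 : ℕ) :=
        sum_congr rfl fun ω hω =>
          dualWeight_mul_pow b b' (ne_zero_of_mem_nthRootsFinset one_ne_zero hω)
    _ = if b' = b then 1 else 0 := by
        rw [← sum_div, sum_sub_distrib, sum_zpow_nthRootsFinset hζ, sum_zpow_nthRootsFinset hζ,
          if_neg not_dvd_add_one, sub_zero, ite_div, div_self hd, zero_div]
        simp only [dvd_sub_iff]

end RootsOfUnity

section Substitution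

variable {ι K E : Type*} [Fintype ι] [DecidableEq ι] [Field K] [AddCommGroup E] [Module K E]
  {d : ι → ℕ}

/-- The value `∑ β, ω ^ β c_β` at the point `ω` of the polynomial with coefficients `c`; with
`d i = r_i - 1`, the index type `∀ i, Fin (d i)` is the box `0 ≤ β_i ≤ r_i - 2`. -/
def substitution (c : (∀ i, Fin (d i)) → E) (ω : ι → K) : E :=
  ∑ β, (∏ i, ω i ^ (β i : ℕ)) • c β

theorem substitution_eq_sum_mul (c : (∀ i, Fin (d i)) → K) (ω : ι → K) :
    substitution c ω = ∑ β, c β * ∏ i, ω i ^ (β i : ℕ) := by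
  simp only [substitution, smul_eq_mul, mul_comm]

theorem sum_prod_dualWeight_mul_prod_pow [DecidableEq K] {ζ : ι → K}
    (hζ : ∀ i, IsPrimitiveRoot (ζ i) (d i + 1)) (β β' : ∀ i, Fin (d i)) :
    ∑ ω ∈ Fintype.piFinset fun i => nontrivialRoots K (d i + 1),
        (∏ i, dualWeight (β i) (ω i)) * ∏ i, ω i ^ (β' i : ℕ) = if β' = β then 1 else 0 := by
  simp only [← prod_mul_distrib]
  rw [← prod_univ_sum (fun i => nontrivialRoots K (d i + 1))
    fun i z => dualWeight (β i) z * z ^ (β' i : ℕ)]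
  simp only [sum_dualWeight_mul_pow (hζ _), Fintype.prod_ite_zero, prod_const_one, funext_iff]

theorem sum_prod_dualWeight_smul_substitution [DecidableEq K] {ζ : ι → K}
    (hζ : ∀ i, IsPrimitiveRoot (ζ i) (d i + 1)) (c : (∀ i, Fin (d i)) → E)
    (β : ∀ i, Fin (d i)) :
    ∑ ω ∈ Fintype.piFinset fun i => nontrivialRoots K (d i + 1),
      (∏ i, dualWeight (β i) (ω i)) • substitution c ω = c β := by
  simp only [substitution, smul_sum, smul_smul]
  rw [sum_comm]
  simp only [← sum_smul, sum_prod_dualWeight_mul_prod_pow hζ, ite_smul, one_smul, zero_smul,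
    sum_ite_eq', mem_univ, if_true]

end Substitution

section Bounds

theorem norm_substitution_le {ι K E : Type*} [Fintype ι] [DecidableEq ι] [NormedField K]
    [SeminormedAddCommGroup E] [NormedSpace K E] {d : ι → ℕ} (c : (∀ i, Fin (d i)) → E)
    {ω : ι → K} (hω : ∀ i, ‖ω i‖ ≤ 1) :
    ‖substitution c ω‖ ≤ (∏ i, d i : ℕ) * ‖c‖ := by
  have term_le : ∀ β, ‖(∏ i, ω i ^ (β i : ℕ)) • c β‖ ≤ ‖c‖ := fun β => by
    have monomial_le : ‖∏ i, ω i ^ (β i : ℕ)‖ ≤ 1 := by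
      rw [norm_prod]
      refine prod_le_one (fun i _ => norm_nonneg _) fun i _ => ?_
      rw [norm_pow]
      exact pow_le_one₀ (norm_nonneg _) (hω i)
    rw [norm_smul]
    exact (mul_le_of_le_one_left (norm_nonneg _) monomial_le).trans (norm_le_pi_norm c β)
  calc ‖substitution c ω‖ ≤ ∑ _β : ∀ i, Fin (d i), ‖c‖ := norm_sum_le_of_le _ fun β _ => term_le β
    _ = (∏ i, d i : ℕ) * ‖c‖ := by
      simp only [sum_const, card_univ, Fintype.card_pi, Fintype.card_fin, nsmul_eq_mul]

theorem norm_dualWeight_le {d : ℕ} (b : Fin d) {ω : ℂ} (hω : ‖ω‖ = 1) :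
    ‖dualWeight b ω‖ ≤ 2 / (d + 1) := by
  have numerator_le : ‖ω ^ (-(b : ℤ)) - ω‖ ≤ 2 := by
    refine (norm_sub_le _ _).trans_eq ?_
    rw [norm_zpow, hω, one_zpow, one_add_one_eq_two]
  rw [dualWeight, norm_div, Complex.norm_natCast, Nat.cast_succ]
  gcongr

variable {ι E : Type*} [SeminormedAddCommGroup E] [NormedSpace ℂ E]

/-- The variety `Ω` of the ideal generated by the `x_i ^ (r_i - 1) + ⋯ + 1`, with
`d i = r_i - 1`. -/
def nontrivialRootTuples (d : ι → ℕ) : Set (ι → ℂ) :=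
  {ω | ∀ i, ω i ^ (d i + 1) = 1 ∧ ω i ≠ 1}

theorem norm_eq_one_of_mem_nontrivialRootTuples {d : ι → ℕ} {ω : ι → ℂ}
    (hω : ω ∈ nontrivialRootTuples d) (i : ι) : ‖ω i‖ = 1 :=
  Complex.norm_eq_one_of_pow_eq_one (hω i).1 (d i).succ_ne_zero

variable [Fintype ι] [DecidableEq ι] {d : ι → ℕ}

theorem mem_piFinset_nontrivialRoots {ω : ι → ℂ} :
    (ω ∈ Fintype.piFinset fun i => nontrivialRoots ℂ (d i + 1)) ↔ ω ∈ nontrivialRootTuples d := by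
  simp only [Fintype.mem_piFinset, mem_nontrivialRoots, nontrivialRootTuples, Set.mem_ofPred_eq]

/-- The largest norm of a value on the variety; the companion `maxCoeff c` is the sup norm `‖c‖`
of the family of coefficients. -/
noncomputable def maxsub (c : (∀ i, Fin (d i)) → E) : ℝ :=
  ⨆ ω : nontrivialRootTuples d, ‖substitution c (ω : ι → ℂ)‖

theorem norm_substitution_le_of_mem (c : (∀ i, Fin (d i)) → E) {ω : ι → ℂ}
    (hω : ω ∈ nontrivialRootTuples d) : ‖substitution c ω‖ ≤ (∏ i, d i : ℕ) * ‖c‖ :=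
  norm_substitution_le c fun i => (norm_eq_one_of_mem_nontrivialRootTuples hω i).le

theorem norm_substitution_le_maxsub (c : (∀ i, Fin (d i)) → E) {ω : ι → ℂ}
    (hω : ω ∈ nontrivialRootTuples d) : ‖substitution c ω‖ ≤ maxsub c := by
  have bounded : BddAbove (Set.range fun ω : nontrivialRootTuples d =>
      ‖substitution c (ω : ι → ℂ)‖) :=
    ⟨(∏ i, d i : ℕ) * ‖c‖, Set.forall_mem_range.mpr fun ω => norm_substitution_le_of_mem c ω.2⟩
  exact le_ciSup bounded ⟨ω, hω⟩

theorem maxsub_nonneg (c : (∀ i, Fin (d i)) → E) : 0 ≤ maxsub c :=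
  Real.iSup_nonneg fun _ => norm_nonneg _

theorem norm_coeff_le_prod_mul_maxsub (c : (∀ i, Fin (d i)) → E) (β : ∀ i, Fin (d i)) :
    ‖c β‖ ≤ (∏ i, (d i * (2 / (d i + 1)) : ℝ)) * maxsub c := by
  have hζ (i : ι) := Complex.isPrimitiveRoot_exp (d i + 1) (d i).succ_ne_zero
  have term_le : ∀ ω ∈ Fintype.piFinset fun i => nontrivialRoots ℂ (d i + 1),
      ‖(∏ i, dualWeight (β i) (ω i)) • substitution c ω‖ ≤
        (∏ i, (2 / (d i + 1) : ℝ)) * maxsub c := fun ω hω => by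
    rw [mem_piFinset_nontrivialRoots] at hω
    rw [norm_smul, norm_prod]
    gcongr with i
    · exact norm_dualWeight_le (β i) (norm_eq_one_of_mem_nontrivialRootTuples hω i)
    · exact norm_substitution_le_maxsub c hω
  calc ‖c β‖ = ‖∑ ω ∈ Fintype.piFinset fun i => nontrivialRoots ℂ (d i + 1),
        (∏ i, dualWeight (β i) (ω i)) • substitution c ω‖ := by
        rw [sum_prod_dualWeight_smul_substitution hζ]
    _ ≤ ∑ _ω ∈ Fintype.piFinset fun i => nontrivialRoots ℂ (d i + 1),
        (∏ i, (2 / (d i + 1) : ℝ)) * maxsub c := norm_sum_le_of_le _ term_le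
    _ = (∏ i, (d i * (2 / (d i + 1)) : ℝ)) * maxsub c := by
        simp only [sum_const, Fintype.card_piFinset, card_nontrivialRoots (hζ _), nsmul_eq_mul,
          Nat.cast_prod, prod_mul_distrib, mul_assoc]

theorem mul_two_div_add_one_le_self (d : ℕ) : (d * (2 / (d + 1)) : ℝ) ≤ d := by
  obtain rfl | hd := Nat.eq_zero_or_pos d
  · simp only [Nat.cast_zero, zero_mul, le_refl]
  · have : (1 : ℝ) ≤ d := by exact_mod_cast hd
    exact mul_le_of_le_one_right d.cast_nonneg ((div_le_one (by positivity)).mpr (by linarith))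

theorem maxCoeff_maxsub_bounds_for_cyclotomic_like_ideal_general (c : (∀ i, Fin (d i)) → E) :
    ‖c‖ ≤ (∏ i, d i : ℕ) * maxsub c ∧
      ∀ ω ∈ nontrivialRootTuples d, ‖substitution c ω‖ ≤ (∏ i, d i : ℕ) * ‖c‖ := by
  refine ⟨?_, fun ω hω => norm_substitution_le_of_mem c hω⟩
  have hmax := maxsub_nonneg c
  refine (pi_norm_le_iff_of_nonneg (by positivity)).mpr fun β =>
    (norm_coeff_le_prod_mul_maxsub c β).trans ?_
  push_cast
  gcongr with i
  exact mul_two_div_add_one_le_self (d i)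

end Bounds

theorem norm_intCast_comp_eq_sup_natAbs {κ : Type*} [Fintype κ] (c : κ → ℤ) :
    ‖fun k => (c k : ℂ)‖ = (univ.sup fun k => (c k).natAbs : ℕ) := by
  have natCast_sup : ((univ.sup fun k => (c k).natAbs : ℕ) : NNReal) =
      univ.sup fun k => ((c k).natAbs : NNReal) :=
    apply_sup_eq_sup_comp_of_linearOrder Nat.cast Nat.mono_cast Nat.cast_zero
  simp only [Pi.norm_def, Complex.nnnorm_intCast, ← NNReal.natCast_natAbs, ← natCast_sup,
    NNReal.coe_natCast]

/-- Let `r_1, …, r_n ≥ 2`, `N = (r_1 − 1) ⋯ (r_n − 1)`, and let `Ω` be the set of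
tuples `ω ∈ ℂ^n` with `ω_i^{r_i} = 1` and `ω_i ≠ 1` (the variety of
`⟨x_1^{r_1−1} + ⋯ + 1, …, x_n^{r_n−1} + ⋯ + 1⟩`). For integer coefficients `c`
indexed by exponent tuples `β` with `0 ≤ β_i ≤ r_i − 2`, and
`S(ω) = Σ_β c_β ω^β`, we have `max_β |c_β| ≤ N · max_{ω ∈ Ω} |S(ω)|` and
`max_{ω ∈ Ω} |S(ω)| ≤ N · max_β |c_β|` — i.e. `maxCoeff(α) ≤ N·maxsub(α)` and
`maxsub(α) ≤ N·maxCoeff(α)` for every `α` in the quotient ring. -/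
theorem maxCoeff_maxsub_bounds_for_cyclotomic_like_ideal
    (n : ℕ) (r : Fin n → ℕ) (hr : ∀ i, 2 ≤ r i)
    (c : ((i : Fin n) → Fin (r i - 1)) → ℤ) :
    (∀ β₀ : (i : Fin n) → Fin (r i - 1),
      (|c β₀| : ℝ) ≤ (∏ i, (r i - 1) : ℕ) *
        ⨆ ω : {ω : Fin n → ℂ // ∀ i, ω i ^ r i = 1 ∧ ω i ≠ 1},
          ‖∑ β : (i : Fin n) → Fin (r i - 1),
              (c β : ℂ) * ∏ i, (ω : Fin n → ℂ) i ^ (β i : ℕ)‖) ∧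
    (∀ ω : Fin n → ℂ, (∀ i, ω i ^ r i = 1 ∧ ω i ≠ 1) →
      ‖∑ β : (i : Fin n) → Fin (r i - 1), (c β : ℂ) * ∏ i, ω i ^ (β i : ℕ)‖ ≤
        (∏ i, (r i - 1) : ℕ) *
          ((Finset.univ.sup fun β : (i : Fin n) → Fin (r i - 1) => (c β).natAbs : ℕ) : ℝ)) := by
  obtain ⟨d, rfl⟩ : ∃ d : Fin n → ℕ, r = fun i => d i + 1 :=
    ⟨fun i => r i - 1, funext fun i => (Nat.sub_add_cancel (one_le_two.trans (hr i))).symm⟩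
  obtain ⟨norm_le, value_le⟩ :=
    maxCoeff_maxsub_bounds_for_cyclotomic_like_ideal_general fun β : ∀ i, Fin (d i) => (c β : ℂ)
  rw [norm_intCast_comp_eq_sup_natAbs] at value_le
  simp only [maxsub, substitution_eq_sum_mul] at norm_le value_le
  exact ⟨fun β => (Complex.norm_intCast _).symm.trans_le ((norm_le_pi_norm _ β).trans norm_le),
    value_le⟩
end
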